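/- Fix α ∈ (0,1]. If either n ≥ 3 and k ≥ 6, or n ≥ 4 and k ≥ 4, then there exists a non-negative polynomial P ∈ C^{k,α}(ℝⁿ) that is not a finite sum of squares of functions in C^{(k+α)/2}(ℝⁿ). -/

import Mathlib

open MvPolynomial

/-- Membership in the half-regular Hölder space `C^{(k+α)/2}(ℝⁿ)`:
`C^{k/2, α/2}` for `k` even, `C^{(k−1)/2, (1+α)/2}` for `k` odd. -/
def HalfRegular {n : ℕ} (k : ℕ) (α : ℝ) (g : EuclideanSpace ℝ (Fin n) → ℝ) : Prop :=
  if Even k then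
    ContDiff ℝ ((k / 2 : ℕ) : ℕ∞) g ∧ ∃ L : ℝ, ∀ x y,
      ‖iteratedFDeriv ℝ (k / 2) g x - iteratedFDeriv ℝ (k / 2) g y‖ ≤
        L * ‖x - y‖ ^ (α / 2)
  else
    ContDiff ℝ (((k - 1) / 2 : ℕ) : ℕ∞) g ∧ ∃ L : ℝ, ∀ x y,
      ‖iteratedFDeriv ℝ ((k - 1) / 2) g x - iteratedFDeriv ℝ ((k - 1) / 2) g y‖ ≤
        L * ‖x - y‖ ^ ((1 + α) / 2)

/-- The iterated forward difference of `g` along the steps in a list. -/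
def listFwdDiff {E F : Type} [AddCommMonoid E] [AddCommGroup F] :
    List E → (E → F) → E → F
  | [], g => g
  | v :: l, g => fwdDiff v (listFwdDiff l g)

section ForwardDifference

variable {E F : Type} [NormedAddCommGroup E] [NormedSpace ℝ E] [NormedAddCommGroup F]
  [NormedSpace ℝ F]

lemma hasFDerivAt_listFwdDiff {g : E → F} (hg : Differentiable ℝ g) (l : List E) (x : E) :
    HasFDerivAt (listFwdDiff l g) (listFwdDiff l (fderiv ℝ g) x) x := by
  induction l generalizing x with
  | nil => exact (hg x).hasFDerivAt
  | cons v l ih => exact ((hasFDerivAt_comp_add_right v).2 (ih (x + v))).sub (ih x)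

/-- A difference of order `d + 1` of a `C^d` function is, near the origin, small relative to the
product of `d` of its steps. -/
lemma exists_norm_listFwdDiff_le {d : ℕ} {g : E → F} (hg : ContDiff ℝ d g) {ε : ℝ}
    (hε : 0 < ε) :
    ∃ δ > 0, ∀ l : List E, l.length = d → (∀ v ∈ l, ‖v‖ < δ) → ∀ w x : E, ‖w‖ < δ → ‖x‖ < δ →
      ‖listFwdDiff (l ++ [w]) g x‖ ≤ ε * (l.map norm).prod := by
  induction d generalizing F with
  | zero =>
    obtain ⟨δ, hδ, h⟩ := Metric.continuousAt_iff.1 hg.continuous.continuousAt (ε / 2) (half_pos hε)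
    refine ⟨δ / 2, half_pos hδ, fun l hl _ w x hw hx => ?_⟩
    obtain rfl := List.length_eq_zero_iff.1 hl
    have h₁ := @h (x + w) (by
      rw [dist_zero_right]; linarith [norm_add_le x w])
    have h₂ := @h x (by rw [dist_zero_right]; linarith)
    have h₃ := dist_triangle_right (g (x + w)) (g x) (g 0)
    rw [dist_eq_norm (g (x + w)) (g x)] at h₃
    simp only [List.nil_append, listFwdDiff, fwdDiff, List.map_nil, List.prod_nil, mul_one]
    linarith
  | succ d ih =>
    obtain ⟨δ, hδ, h⟩ := ih (g := fderiv ℝ g) (hg.fderiv_right (by norm_cast))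
    refine ⟨δ / 2, half_pos hδ, fun l hl hlδ w x hw hx => ?_⟩
    obtain _ | ⟨v, l⟩ := l
    · simp at hl
    simp only [List.mem_cons, forall_eq_or_imp] at hlδ
    have hd := hasFDerivAt_listFwdDiff (hg.differentiable (by simp)) (l ++ [w])
    have key := Convex.norm_image_sub_le_of_norm_fderiv_le (𝕜 := ℝ) (s := Metric.ball (0 : E) δ)
      (f := listFwdDiff (l ++ [w]) g) (C := ε * (l.map norm).prod) (x := x) (y := x + v)
      (fun y _ => (hd y).differentiableAt)
      (fun y hy => by
        rw [(hd y).fderiv]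
        exact h l (by simpa using hl) (fun u hu => by linarith [hlδ.2 u hu]) w y (by linarith)
          (by simpa using hy))
      (convex_ball 0 δ) (by rw [mem_ball_zero_iff]; linarith)
      (by rw [mem_ball_zero_iff]; linarith [norm_add_le x v])
    rw [add_sub_cancel_left] at key
    simp only [List.cons_append, listFwdDiff, fwdDiff, List.map_cons, List.prod_cons]
    linarith

lemma eventually_norm_listFwdDiff_smul_le {g : E → F} (l : List E) (w x : E)
    (hg : ContDiff ℝ l.length g) {ε : ℝ} (hε : 0 < ε) :
    ∀ᶠ t : ℝ in nhdsWithin 0 (Set.Ioi 0),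
      ‖listFwdDiff (l.map (t • ·) ++ [t • w]) g (t • x)‖ ≤
        ε * (t ^ l.length * (l.map norm).prod) := by
  obtain ⟨δ, hδ, h⟩ := exists_norm_listFwdDiff_le hg hε
  have small (v : E) : ∀ᶠ t : ℝ in nhdsWithin 0 (Set.Ioi 0), ‖t • v‖ < δ := by
    have : Filter.Tendsto (fun t : ℝ => ‖t • v‖) (nhds 0) (nhds 0) := by
      have : Continuous fun t : ℝ => ‖t • v‖ := by fun_prop
      simpa using this.tendsto 0
    exact (this.eventually_lt_const hδ).filter_mono nhdsWithin_le_nhds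
  have smallList : ∀ᶠ t : ℝ in nhdsWithin 0 (Set.Ioi 0), ∀ v ∈ l, ‖t • v‖ < δ := by
    have := (Filter.eventually_all_finite l.finite_toSet).2 fun v _ => small v
    simpa using this
  filter_upwards [small w, small x, smallList, self_mem_nhdsWithin] with t hw hx hl ht
  have hprod : ((l.map (t • ·)).map norm).prod = t ^ l.length * (l.map norm).prod := by
    clear hg h smallList hl
    induction l with
    | nil => simp
    | cons v l ih =>
      simp only [List.map_cons, List.prod_cons, ih, List.length_cons, norm_smul, Real.norm_eq_abs,
        abs_of_pos (Set.mem_Ioi.1 ht)]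
      ring
  rw [← hprod]
  exact h _ (by simp) (by simpa using hl) _ _ hw hx

/-- If a difference operator of order `d + 1` recovers, from functions vanishing on the zero set
of a form of degree `2 * d`, their values at `p`, then the form cannot be a sum of squares of `C^d`
functions and positive at `p`. -/
lemma nonpos_of_eq_sum_sq {f : E → ℝ} {l : List E} {w x p : E}
    (hom : ∀ t : ℝ, f (t • p) = t ^ (2 * l.length) * f p)
    (hdiff : ∀ g : E → ℝ, (∀ y, f y = 0 → g y = 0) → ∀ t : ℝ,
      |g (t • p)| ≤ |listFwdDiff (l.map (t • ·) ++ [t • w]) g (t • x)|)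
    {m : ℕ} {g : Fin m → E → ℝ} (hg : ∀ j, ContDiff ℝ l.length (g j))
    (hsum : ∀ y, f y = ∑ j, g j y ^ 2) : f p ≤ 0 := by
  have hzero (j : Fin m) (y : E) (hy : f y = 0) : g j y = 0 := by
    rw [hsum, Finset.sum_eq_zero_iff_of_nonneg fun _ _ => sq_nonneg _] at hy
    simpa using hy j (Finset.mem_univ j)
  have bound (ε : ℝ) (hε : 0 < ε) : f p ≤ m * (ε * (l.map norm).prod) ^ 2 := by
    obtain ⟨t, ht, ht0⟩ := ((Filter.eventually_all.2 fun j =>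
      eventually_norm_listFwdDiff_smul_le l w x (hg j) hε).and self_mem_nhdsWithin).exists
    have ht0 : 0 < t := ht0
    have hle : t ^ (2 * l.length) * f p ≤
        t ^ (2 * l.length) * (m * (ε * (l.map norm).prod) ^ 2) := by
      rw [← hom, hsum]
      calc ∑ j, g j (t • p) ^ 2
          ≤ ∑ _j : Fin m, (ε * (t ^ l.length * (l.map norm).prod)) ^ 2 :=
            Finset.sum_le_sum fun j _ => sq_le_sq.2 <|
              ((hdiff (g j) (hzero j) t).trans (ht j)).trans (le_abs_self _)
        _ = _ := by simp; ring
    exact le_of_mul_le_mul_left hle (by positivity)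
  have lim : Filter.Tendsto (fun ε : ℝ => m * (ε * (l.map norm).prod) ^ 2)
      (nhdsWithin 0 (Set.Ioi 0)) (nhds 0) := by
    have : Continuous fun ε : ℝ => m * (ε * (l.map norm).prod) ^ 2 := by fun_prop
    simpa using (this.tendsto 0).mono_left nhdsWithin_le_nhds
  exact ge_of_tendsto lim (by filter_upwards [self_mem_nhdsWithin] with ε hε using bound ε hε)

end ForwardDifference

/-- `f` is smooth and its derivatives of order greater than `d` vanish. -/
structure DerivVanishAbove {E : Type*} [NormedAddCommGroup E] [NormedSpace ℝ E]
    (d : ℕ) (f : E → ℝ) : Prop where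
  contDiff : ContDiff ℝ (⊤ : ℕ∞) f
  iteratedFDeriv_eq_zero : ∀ n, d < n → ∀ x, iteratedFDeriv ℝ n f x = 0

namespace DerivVanishAbove

variable {E : Type*} [NormedAddCommGroup E] [NormedSpace ℝ E] {d e : ℕ} {f g : E → ℝ}

lemma mono (hf : DerivVanishAbove d f) (h : d ≤ e) : DerivVanishAbove e f :=
  ⟨hf.1, fun n hn => hf.2 n (h.trans_lt hn)⟩

lemma const (c : ℝ) : DerivVanishAbove 0 fun _ : E => c :=
  ⟨contDiff_const, fun n hn x => by rw [iteratedFDeriv_const_of_ne hn.ne']; rfl⟩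

lemma clm (L : E →L[ℝ] ℝ) : DerivVanishAbove 1 L := by
  refine ⟨L.contDiff, fun n hn x => ?_⟩
  obtain _ | n := n
  · simp at hn
  rw [← norm_eq_zero, ← norm_iteratedFDeriv_fderiv]
  have : fderiv ℝ L = fun _ => L := funext fun _ => L.fderiv
  rw [this, iteratedFDeriv_const_of_ne (by omega)]
  simp

lemma mul (hf : DerivVanishAbove d f) (hg : DerivVanishAbove e g) :
    DerivVanishAbove (d + e) fun x => f x * g x := by
  refine ⟨hf.1.mul hg.1, fun n hn x => ?_⟩
  rw [← norm_le_zero_iff]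
  refine (norm_iteratedFDeriv_mul_le hf.1 hg.1 x (by exact_mod_cast le_top)).trans_eq ?_
  refine Finset.sum_eq_zero fun i _ => ?_
  rcases lt_or_ge d i with h | h
  · simp [hf.2 i h x]
  · simp [hg.2 (n - i) (by omega) x]

lemma pow (hf : DerivVanishAbove d f) (m : ℕ) :
    DerivVanishAbove (m * d) fun x => f x ^ m := by
  induction m with
  | zero => simpa using const 1
  | succ m ih => simpa only [pow_succ, Nat.succ_mul] using ih.mul hf

lemma prod {ι : Type*} (s : Finset ι) {f : ι → E → ℝ} {d : ι → ℕ}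
    (h : ∀ i ∈ s, DerivVanishAbove (d i) (f i)) :
    DerivVanishAbove (∑ i ∈ s, d i) fun x => ∏ i ∈ s, f i x := by
  classical
  induction s using Finset.induction_on with
  | empty => simpa using const 1
  | insert i s hi ih =>
    simp only [Finset.prod_insert hi, Finset.sum_insert hi]
    exact (h i (by simp)).mul (ih fun j hj => h j (by simp [hj]))

lemma sum {ι : Type*} (s : Finset ι) {f : ι → E → ℝ}
    (h : ∀ i ∈ s, DerivVanishAbove d (f i)) :
    DerivVanishAbove d fun x => ∑ i ∈ s, f i x := by
  refine ⟨ContDiff.sum fun i hi => (h i hi).1, fun n hn x => ?_⟩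
  rw [iteratedFDeriv_sum fun i hi => (h i hi).1.of_le (by exact_mod_cast le_top)]
  simpa using Finset.sum_eq_zero fun i hi => (h i hi).2 n hn x

lemma iteratedFDeriv_eq (hf : DerivVanishAbove d f) {k : ℕ} (hk : d ≤ k) (x y : E) :
    iteratedFDeriv ℝ k f x = iteratedFDeriv ℝ k f y := by
  refine is_const_of_fderiv_eq_zero (𝕜 := ℝ)
    (hf.1.differentiable_iteratedFDeriv (by exact_mod_cast ENat.natCast_lt_top k)) (fun z => ?_) x y
  rw [← norm_eq_zero, norm_fderiv_iteratedFDeriv, hf.2 (k + 1) (by omega), norm_zero]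

end DerivVanishAbove

lemma derivVanishAbove_eval {n d : ℕ} {P : MvPolynomial (Fin n) ℝ} (hP : P.IsHomogeneous d) :
    DerivVanishAbove d fun z : EuclideanSpace ℝ (Fin n) => eval (fun i => z i) P := by
  simp only [eval_eq]
  refine DerivVanishAbove.sum _ fun e he => ?_
  have hdeg : e.degree = d := by
    rw [Finsupp.degree_eq_weight_one]; exact hP (mem_support_iff.1 he)
  have hprod := DerivVanishAbove.prod e.support (E := EuclideanSpace ℝ (Fin n))
    fun i _ => (DerivVanishAbove.clm (EuclideanSpace.proj i)).pow (e i)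
  refine ((DerivVanishAbove.const (P.coeff e)).mul hprod).mono ?_
  simpa [Finsupp.degree_apply] using hdeg.le

lemma eval_smul_of_isHomogeneous {n d : ℕ} {P : MvPolynomial (Fin n) ℝ} (hP : P.IsHomogeneous d)
    (t : ℝ) (x : Fin n → ℝ) : eval (fun i => t * x i) P = t ^ d * eval x P := by
  rw [eval_eq, eval_eq, Finset.mul_sum]
  refine Finset.sum_congr rfl fun e he => ?_
  have hdeg : e.degree = d := by
    rw [Finsupp.degree_eq_weight_one]; exact hP (mem_support_iff.1 he)
  simp only [mul_pow, Finset.prod_mul_distrib, Finset.prod_pow_eq_pow_sum]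
  rw [show ∑ i ∈ e.support, e i = d from hdeg]
  ring

lemma HalfRegular.contDiff {n k d : ℕ} {α : ℝ} {g : EuclideanSpace ℝ (Fin n) → ℝ}
    (hg : HalfRegular k α g) (hd : 2 * d ≤ k) : ContDiff ℝ d g := by
  unfold HalfRegular at hg
  split_ifs at hg with hk
  · exact hg.1.of_le (by norm_cast; omega)
  · have : k ≠ 2 * d := fun h => hk ⟨d, by omega⟩
    exact hg.1.of_le (by norm_cast; omega)

/-- A nonnegative form of degree `2 * d ≤ k` witnesses the failure of half-regular sum of squares
decompositions once a difference operator of order `d + 1` isolates its value at a point `p` of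
positivity. -/
lemma exists_not_sum_sq_of_form {n k : ℕ} (α : ℝ) {P : MvPolynomial (Fin n) ℝ}
    {l : List (EuclideanSpace ℝ (Fin n))} {w x p : EuclideanSpace ℝ (Fin n)}
    (hP : P.IsHomogeneous (2 * l.length)) (hk : 2 * l.length ≤ k)
    (hnonneg : ∀ x : Fin n → ℝ, 0 ≤ eval x P) (hp : 0 < eval (fun i => p i) P)
    (hdiff : ∀ g : EuclideanSpace ℝ (Fin n) → ℝ,
      (∀ y : EuclideanSpace ℝ (Fin n), eval (fun i => y i) P = 0 → g y = 0) → ∀ t : ℝ,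
      |g (t • p)| ≤ |listFwdDiff (l.map (t • ·) ++ [t • w]) g (t • x)|) :
    ∃ P : MvPolynomial (Fin n) ℝ,
      (∀ x : Fin n → ℝ, 0 ≤ eval x P) ∧
      (∃ L : ℝ, ∀ x y : EuclideanSpace ℝ (Fin n),
        ‖iteratedFDeriv ℝ k (fun z : EuclideanSpace ℝ (Fin n) => eval (fun i => z i) P) x -
          iteratedFDeriv ℝ k (fun z : EuclideanSpace ℝ (Fin n) => eval (fun i => z i) P) y‖ ≤
            L * ‖x - y‖ ^ α) ∧
      ¬∃ (m : ℕ) (g : Fin m → EuclideanSpace ℝ (Fin n) → ℝ),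
        (∀ j, HalfRegular k α (g j)) ∧
          ∀ x : EuclideanSpace ℝ (Fin n), eval (fun i => x i) P = ∑ j, (g j x) ^ 2 := by
  refine ⟨P, hnonneg, ⟨0, fun x y => ?_⟩, ?_⟩
  · rw [(derivVanishAbove_eval hP).iteratedFDeriv_eq hk x y]
    simp
  · rintro ⟨m, g, hg, hsum⟩
    have hom (t : ℝ) : eval (fun i => (t • p) i) P =
        t ^ (2 * l.length) * eval (fun i => p i) P :=
      eval_smul_of_isHomogeneous hP t fun i => p i
    exact hp.not_ge <| nonpos_of_eq_sum_sq
      (f := fun z : EuclideanSpace ℝ (Fin n) => eval (fun i => z i) P) (p := p) hom hdiff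
      (fun j => (hg j).contDiff hk) hsum

/-- Robinson's ternary sextic, which is Schur's cubic evaluated at the squares of the variables. -/
noncomputable def robinsonSextic {σ : Type*} (a b c : σ) : MvPolynomial σ ℝ :=
  X a ^ 2 * (X a ^ 2 - X b ^ 2) * (X a ^ 2 - X c ^ 2) +
    X b ^ 2 * (X b ^ 2 - X a ^ 2) * (X b ^ 2 - X c ^ 2) +
    X c ^ 2 * (X c ^ 2 - X a ^ 2) * (X c ^ 2 - X b ^ 2)

/-- Robinson's quaternary quartic. -/
noncomputable def robinsonQuartic {σ : Type*} (a b c e : σ) : MvPolynomial σ ℝ :=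
  X a * X a * (X a - X e) * (X a - X e) + X b * X b * (X b - X e) * (X b - X e) +
    X c * X c * (X c - X e) * (X c - X e) +
    C 2 * (X a * X b * X c * (X a + X b + X c - X e - X e))

lemma robinsonSextic_isHomogeneous {σ : Type*} (a b c : σ) :
    (robinsonSextic a b c).IsHomogeneous 6 := by
  have h (i : σ) : (X i ^ 2 : MvPolynomial σ ℝ).IsHomogeneous 2 := isHomogeneous_X_pow i 2
  have term (i j l : σ) : (X i ^ 2 * (X i ^ 2 - X j ^ 2) * (X i ^ 2 - X l ^ 2) :
      MvPolynomial σ ℝ).IsHomogeneous 6 :=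
    ((h i).mul ((h i).sub (h j))).mul ((h i).sub (h l))
  exact ((term a b c).add (term b a c)).add (term c a b)

lemma robinsonQuartic_isHomogeneous {σ : Type*} (a b c e : σ) :
    (robinsonQuartic a b c e).IsHomogeneous 4 := by
  have h (i : σ) : (X i : MvPolynomial σ ℝ).IsHomogeneous 1 := isHomogeneous_X ℝ i
  have term (i : σ) : (X i * X i * (X i - X e) * (X i - X e) :
      MvPolynomial σ ℝ).IsHomogeneous 4 :=
    (((h i).mul (h i)).mul ((h i).sub (h e))).mul ((h i).sub (h e))
  exact (((term a).add (term b)).add (term c)).add <| (isHomogeneous_C σ 2).mul <|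
    (((h a).mul (h b)).mul (h c)).mul <|
      ((((h a).add (h b)).add (h c)).sub (h e)).sub (h e)

lemma schur_nonneg {u v w : ℝ} (hu : 0 ≤ u) (hv : 0 ≤ v) (hw : 0 ≤ w) :
    0 ≤ u * (u - v) * (u - w) + v * (v - u) * (v - w) + w * (w - u) * (w - v) := by
  have sorted {u v w : ℝ} (hw : 0 ≤ w) (hvw : w ≤ v) (huv : v ≤ u) :
      0 ≤ u * (u - v) * (u - w) + v * (v - u) * (v - w) + w * (w - u) * (w - v) := by
    have h₁ := mul_nonneg (mul_nonneg hw (sub_nonneg.2 (hvw.trans huv))) (sub_nonneg.2 hvw)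
    have h₂ := mul_nonneg (sq_nonneg (u - v)) (by linarith : 0 ≤ u + v - w)
    linarith
  rcases le_total u v with h₁ | h₁ <;> rcases le_total v w with h₂ | h₂ <;>
    rcases le_total u w with h₃ | h₃
  · linarith [sorted hu h₁ h₂]
  · linarith [sorted hu h₁ h₂]
  · linarith [sorted hu h₃ h₂]
  · linarith [sorted hw h₃ h₁]
  · linarith [sorted hv h₁ h₃]
  · linarith [sorted hv h₂ h₃]
  · linarith [sorted hw h₂ h₁]
  · linarith [sorted hw h₂ h₁]

lemma robinsonSextic_nonneg {σ : Type*} (a b c : σ) (x : σ → ℝ) :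
    0 ≤ eval x (robinsonSextic a b c) := by
  simpa [robinsonSextic] using schur_nonneg (sq_nonneg (x a)) (sq_nonneg (x b)) (sq_nonneg (x c))

lemma robinsonQuartic_nonneg {σ : Type*} (a b c e : σ) (x : σ → ℝ) :
    0 ≤ eval x (robinsonQuartic a b c e) := by
  simp only [robinsonQuartic, map_add, map_mul, map_sub, eval_X, eval_C]
  generalize x a = u, x b = v, x c = w, x e = s
  rcases (by positivity : 0 ≤ u ^ 2 + v ^ 2 + w ^ 2).eq_or_lt with h | h
  · obtain rfl : u = 0 := by nlinarith [sq_nonneg u, sq_nonneg v, sq_nonneg w]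
    obtain rfl : v = 0 := by nlinarith [sq_nonneg v, sq_nonneg w]
    obtain rfl : w = 0 := by nlinarith [sq_nonneg w]
    simp
  · refine nonneg_of_mul_nonneg_right ?_ h
    calc (0 : ℝ) ≤ ((u ^ 2 + v ^ 2 + w ^ 2) * s - (u ^ 3 + v ^ 3 + w ^ 3 + 2 * u * v * w)) ^ 2 +
          ((u - v) * (v - w) * (w - u)) ^ 2 + 2 * (u * v * w) ^ 2 := by positivity
      _ = _ := by ring

/-- Theorem 7.5: for `n ≥ 3, k ≥ 6` or `n ≥ 4, k ≥ 4` there is a nonnegative polynomial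
in `C^{k,α}(ℝⁿ)` which is not a finite sum of squares of half-regular functions. -/
theorem stmt_17 {n k : ℕ} (α : ℝ) (hα : 0 < α) (hα1 : α ≤ 1)
    (hnk : (3 ≤ n ∧ 6 ≤ k) ∨ (4 ≤ n ∧ 4 ≤ k)) :
    ∃ P : MvPolynomial (Fin n) ℝ,
      (∀ x : Fin n → ℝ, 0 ≤ eval x P) ∧
      (∃ L : ℝ, ∀ x y : EuclideanSpace ℝ (Fin n),
        ‖iteratedFDeriv ℝ k (fun z : EuclideanSpace ℝ (Fin n) => eval (fun i => z i) P) x -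
          iteratedFDeriv ℝ k (fun z : EuclideanSpace ℝ (Fin n) => eval (fun i => z i) P) y‖ ≤
            L * ‖x - y‖ ^ α) ∧
      ¬∃ (m : ℕ) (g : Fin m → EuclideanSpace ℝ (Fin n) → ℝ),
        (∀ j, HalfRegular k α (g j)) ∧
          ∀ x : EuclideanSpace ℝ (Fin n), eval (fun i => x i) P = ∑ j, (g j x) ^ 2 := by
  rcases hnk with ⟨hn, hk⟩ | ⟨hn, hk⟩
  · obtain ⟨a, b, c, hab, hac, hbc⟩ : ∃ a b c : Fin n, a ≠ b ∧ a ≠ c ∧ b ≠ c :=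
      ⟨⟨0, by omega⟩, ⟨1, by omega⟩, ⟨2, by omega⟩, by simp⟩
    let u (i : Fin n) : EuclideanSpace ℝ (Fin n) := EuclideanSpace.single i 1
    refine exists_not_sum_sq_of_form α (P := robinsonSextic a b c) (l := [u a, u a, u b])
      (w := u b) (x := u c - u a - u b) (p := u c) (robinsonSextic_isHomogeneous a b c) hk
      (robinsonSextic_nonneg a b c) ?_ fun g hg t => ?_
    · simp [robinsonSextic, u, hac, hbc]
    let y (r s : ℝ) : EuclideanSpace ℝ (Fin n) := t • (u c + r • u a + s • u b)
    have hz (r s : ℝ) (hr : r = -1 ∨ r = 0 ∨ r = 1) (hs : s = -1 ∨ s = 0 ∨ s = 1)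
        (h : r ≠ 0 ∨ s ≠ 0) : g (y r s) = 0 := by
      apply hg
      simp only [robinsonSextic, y, u, map_add, map_mul, map_sub, map_pow, eval_X, PiLp.smul_apply,
        PiLp.add_apply, PiLp.single_apply, smul_eq_mul, hab, hac, hbc, hab.symm, hac.symm,
        hbc.symm, if_true, if_false]
      rcases hr with rfl | rfl | rfl <;> rcases hs with rfl | rfl | rfl <;> first | ring1 | simp at h
    have hya (r s : ℝ) : y r s + t • u a = y (r + 1) s := by simp only [y]; module
    have hyb (r s : ℝ) : y r s + t • u b = y r (s + 1) := by simp only [y]; module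
    have hp : t • u c = y 0 0 := by simp only [y]; module
    have hx : t • (u c - u a - u b) = y (-1) (-1) := by simp only [y]; module
    simp only [List.map_cons, List.map_nil, List.cons_append, List.nil_append, listFwdDiff, fwdDiff,
      hx, hp, hya, hyb]
    norm_num [hz]
    rw [show g (y 0 0) + g (y 0 0) - (-g (y 0 0) - g (y 0 0)) = 4 * g (y 0 0) by ring, abs_mul,
      abs_of_pos (by norm_num : (0 : ℝ) < 4)]
    linarith [abs_nonneg (g (y 0 0))]
  · obtain ⟨a, b, c, e, hab, hac, hbc, hae, hbe, hce⟩ : ∃ a b c e : Fin n,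
        a ≠ b ∧ a ≠ c ∧ b ≠ c ∧ a ≠ e ∧ b ≠ e ∧ c ≠ e :=
      ⟨⟨0, by omega⟩, ⟨1, by omega⟩, ⟨2, by omega⟩, ⟨3, by omega⟩, by simp⟩
    let u (i : Fin n) : EuclideanSpace ℝ (Fin n) := EuclideanSpace.single i 1
    refine exists_not_sum_sq_of_form α (P := robinsonQuartic a b c e) (l := [u a, u b])
      (w := u c) (x := u e) (p := u e + u a + u b + u c) (robinsonQuartic_isHomogeneous a b c e) hk
      (robinsonQuartic_nonneg a b c e) ?_ fun g hg t => ?_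
    · norm_num [robinsonQuartic, u, hab, hac, hbc, hae, hbe, hce, hab.symm, hac.symm, hbc.symm,
        hae.symm, hbe.symm, hce.symm]
    let y (r s q : ℝ) : EuclideanSpace ℝ (Fin n) := t • (u e + r • u a + s • u b + q • u c)
    have hz (r s q : ℝ) (hr : r = 0 ∨ r = 1) (hs : s = 0 ∨ s = 1) (hq : q = 0 ∨ q = 1)
        (h : r = 0 ∨ s = 0 ∨ q = 0) : g (y r s q) = 0 := by
      apply hg
      simp only [robinsonQuartic, y, u, map_add, map_mul, map_sub, eval_X, eval_C, PiLp.smul_apply,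
        PiLp.add_apply, PiLp.single_apply, smul_eq_mul, hab, hac, hbc, hae, hbe, hce,
        hab.symm, hac.symm, hbc.symm, hae.symm, hbe.symm, hce.symm, if_true, if_false]
      rcases hr with rfl | rfl <;> rcases hs with rfl | rfl <;> rcases hq with rfl | rfl <;>
        first | ring1 | simp at h
    have hya (r s q : ℝ) : y r s q + t • u a = y (r + 1) s q := by simp only [y]; module
    have hyb (r s q : ℝ) : y r s q + t • u b = y r (s + 1) q := by simp only [y]; module
    have hyc (r s q : ℝ) : y r s q + t • u c = y r s (q + 1) := by simp only [y]; module
    have hp : t • (u e + u a + u b + u c) = y 1 1 1 := by simp only [y]; module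
    have hx : t • u e = y 0 0 0 := by simp only [y]; module
    simp only [List.map_cons, List.map_nil, List.cons_append, List.nil_append, listFwdDiff, fwdDiff,
      hx, hp, hya, hyb, hyc, zero_add]
    norm_num [hz]
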